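/- In the gluing setup, for every pair of distinct f, g ∈ 𝔉, every x ∈ V_f \ V_p, and every y ∈ V_g \ V_p, we have d̂(x,y) − ď(x,y) ≥ min{ Λ(x; V_f ∩ V_p), Λ(y; V_p ∩ V_g) }, where Λ(v;B) = inf{ d̂(a,v) + d̂(v,b) − d̂(a,b) : a,b ∈ B }. -/

import Mathlib

open scoped Classical

universe u

namespace GraphMetricPaper

variable {X : Type u}

/-- The vertex set `V = ⋃ E` of a graph given by an adjacency relation `E`. -/
def Vtx (E : X → X → Prop) : Set X := {x | ∃ y, E x y}

/-- Two points are joined by a walk in the graph `E`. -/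
def Joined (E : X → X → Prop) (x y : X) : Prop :=
  ∃ (n : ℕ) (c : ℕ → X), c 0 = x ∧ c n = y ∧ ∀ i, i < n → E (c i) (c (i + 1))

/-- The set of weights of walks from `x` to `y`. -/
def walkSums (E : X → X → Prop) (d : X → X → ℝ) (x y : X) : Set ℝ :=
  {s | ∃ (n : ℕ) (c : ℕ → X), c 0 = x ∧ c n = y ∧ (∀ i, i < n → E (c i) (c (i + 1))) ∧
    s = ∑ i ∈ Finset.range n, d (c i) (c (i + 1))}

/-- The shortest-path pseudometric `d̂` determined by a weight function `d` on a graph `E`. -/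
noncomputable def hatd (E : X → X → Prop) (d : X → X → ℝ) (x y : X) : ℝ :=
  sInf (walkSums E d x y)

/-- The function `ď` bounding the possible extensions of `d` from below:
`ď(x,y) = sup_{ab ∈ E} max {0, d(ab) - d̂(a,x) - d̂(y,b)}`. -/
noncomputable def checkd (E : X → X → Prop) (d : X → X → ℝ) (x y : X) : ℝ :=
  sSup ({0} ∪ {r | ∃ a b, E a b ∧ r = d a b - hatd E d a x - hatd E d y b})

/-- The pseudometric `d̈` on doubletons:
`d̈(xy,uv) = min {d̂(x,u) + d̂(y,v), d̂(x,v) + d̂(y,u)}`. -/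
noncomputable def ddot (E : X → X → Prop) (d : X → X → ℝ) (x y u v : X) : ℝ :=
  min (hatd E d x u + hatd E d y v) (hatd E d x v + hatd E d y u)

/-- `d` is a graph pseudometric with edge relation `E`:  `E` is a (symmetric, irreflexive)
connected graph, `d` is a nonnegative symmetric weight on the edges, and `d = d̂` on edges. -/
structure IsGraphPseudometric (E : X → X → Prop) (d : X → X → ℝ) : Prop where
  symm : ∀ ⦃a b⦄, E a b → E b a
  irrefl : ∀ a, ¬ E a a
  wt_symm : ∀ ⦃a b⦄, E a b → d a b = d b a
  nonneg : ∀ ⦃a b⦄, E a b → 0 ≤ d a b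
  connected : ∀ x ∈ Vtx E, ∀ y ∈ Vtx E, Joined E x y
  edge_eq : ∀ ⦃a b⦄, E a b → d a b = hatd E d a b

/-- A graph metric is a graph pseudometric with strictly positive weights. -/
def IsGraphMetric (E : X → X → Prop) (d : X → X → ℝ) : Prop :=
  IsGraphPseudometric E d ∧ ∀ ⦃a b⦄, E a b → 0 < d a b

/-- A floppy graph pseudometric: `ď(x,y) < d̂(x,y)` for every `xy ∈ [V]² \ E`. -/
def FloppyPseudometric (E : X → X → Prop) (d : X → X → ℝ) : Prop :=
  IsGraphPseudometric E d ∧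
    ∀ x ∈ Vtx E, ∀ y ∈ Vtx E, x ≠ y → ¬ E x y → checkd E d x y < hatd E d x y

/-- A floppy graph metric: `ď(x,y) < d̂(x,y)` for every `xy ∈ [V]² \ E`. -/
def FloppyMetric (E : X → X → Prop) (d : X → X → ℝ) : Prop :=
  IsGraphMetric E d ∧
    ∀ x ∈ Vtx E, ∀ y ∈ Vtx E, x ≠ y → ¬ E x y → checkd E d x y < hatd E d x y

/-- The edge relation of the one-step extension `E ∪ {xy}`. -/
def extEdge (E : X → X → Prop) (x y : X) : X → X → Prop :=
  fun a b => E a b ∨ (a = x ∧ b = y) ∨ (a = y ∧ b = x)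

/-- The weight function of the one-step extension `d ∪ {⟨xy, r⟩}`. -/
noncomputable def extWt (d : X → X → ℝ) (x y : X) (r : ℝ) : X → X → ℝ :=
  fun a b => if (a = x ∧ b = y) ∨ (a = y ∧ b = x) then r else d a b

/-- The set `[V]² \ E` of unordered pairs of distinct vertices that are not edges. -/
def nonEdgePairs (E : X → X → Prop) : Set (Sym2 X) :=
  {e | ∃ a b : X, e = s(a, b) ∧ a ≠ b ∧ a ∈ Vtx E ∧ b ∈ Vtx E ∧ ¬ E a b}

/-- A set of (unordered) weighted pairs, presented as a relation `R`, is a full metric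
on `V`: it is symmetric, its domain is exactly `[V]²`, it is single-valued, positive,
and satisfies the triangle inequality. -/
def IsFullMetricRel (V : Set X) (R : X → X → ℝ → Prop) : Prop :=
  (∀ a b r, R a b r → R b a r) ∧
  (∀ a b r, R a b r → a ∈ V ∧ b ∈ V ∧ a ≠ b) ∧
  (∀ a b, a ∈ V → b ∈ V → a ≠ b → ∃ r, R a b r) ∧
  (∀ a b r s, R a b r → R a b s → r = s) ∧
  (∀ a b r, R a b r → 0 < r) ∧
  (∀ a b c r s t, R a b r → R b c s → R a c t → t ≤ r + s)

/-- A weight function `D` on `[V]²` is a full metric on `V`. -/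
def IsFullMetricOn (V : Set X) (D : X → X → ℝ) : Prop :=
  (∀ a b, a ∈ V → b ∈ V → a ≠ b → D a b = D b a) ∧
  (∀ a b, a ∈ V → b ∈ V → a ≠ b → 0 < D a b) ∧
  (∀ a b c, a ∈ V → b ∈ V → c ∈ V → a ≠ b → b ≠ c → a ≠ c → D a c ≤ D a b + D b c)

/-- Player I has a winning strategy in the metric-extending game `Game_d(lam, Fam)`:
there are functions `S1, S2` choosing, for each inning `β < lam` and each sequence of
previous answers of player II, a legal doubleton in `[V]²` and a set from `Fam`, such that
for every play of player II respecting the strategy, the resulting relation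
`d ∪ {⟨x_α y_α, r_α⟩ : α < lam}` is a full metric on `V`. -/
def WinningStratI (V : Set X) (E : X → X → Prop) (d : X → X → ℝ)
    (lam : Ordinal.{u}) (Fam : Set (Set ℝ)) : Prop :=
  ∃ (S1 : ∀ β : Ordinal.{u}, β < lam → (∀ α : Ordinal.{u}, α < β → ℝ) → X × X)
    (S2 : ∀ β : Ordinal.{u}, β < lam → (∀ α : Ordinal.{u}, α < β → ℝ) → Set ℝ),
    (∀ β hβ s, S2 β hβ s ∈ Fam) ∧
    (∀ β hβ s, (S1 β hβ s).1 ∈ V ∧ (S1 β hβ s).2 ∈ V ∧ (S1 β hβ s).1 ≠ (S1 β hβ s).2) ∧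
    (∀ s : ∀ α : Ordinal.{u}, α < lam → ℝ,
      (∀ α (hα : α < lam), s α hα ∈ S2 α hα (fun γ hγ => s γ (hγ.trans hα))) →
      IsFullMetricRel V (fun a b r =>
        (E a b ∧ r = d a b) ∨
        ∃ α, ∃ hα : α < lam,
          ((a = (S1 α hα (fun γ hγ => s γ (hγ.trans hα))).1 ∧
            b = (S1 α hα (fun γ hγ => s γ (hγ.trans hα))).2) ∨
           (a = (S1 α hα (fun γ hγ => s γ (hγ.trans hα))).2 ∧
            b = (S1 α hα (fun γ hγ => s γ (hγ.trans hα))).1)) ∧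
          r = s α hα))

/-- Player II has a winning strategy in the metric-extending game `Game_d(lam, Fam)`:
there is a function `T` assigning to each inning `β < lam` and each sequence of moves of
player I (of length `β + 1`) an answer in the set component of the last move, such that
for every legal play of player I, the resulting relation is not a full metric on `V`. -/
def WinningStratII (V : Set X) (E : X → X → Prop) (d : X → X → ℝ)
    (lam : Ordinal.{u}) (Fam : Set (Set ℝ)) : Prop :=
  ∃ T : ∀ β : Ordinal.{u}, β < lam → (∀ α : Ordinal.{u}, α ≤ β → (X × X) × Set ℝ) → ℝ,
    (∀ β hβ p, (p β le_rfl).2 ∈ Fam → T β hβ p ∈ (p β le_rfl).2) ∧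
    (∀ p : ∀ α : Ordinal.{u}, α < lam → (X × X) × Set ℝ,
      (∀ α hα, (p α hα).1.1 ∈ V ∧ (p α hα).1.2 ∈ V ∧ (p α hα).1.1 ≠ (p α hα).1.2 ∧
        (p α hα).2 ∈ Fam) →
      ¬ IsFullMetricRel V (fun a b r =>
        (E a b ∧ r = d a b) ∨
        ∃ α, ∃ hα : α < lam,
          ((a = (p α hα).1.1 ∧ b = (p α hα).1.2) ∨
           (a = (p α hα).1.2 ∧ b = (p α hα).1.1)) ∧
          r = T α hα (fun γ hγ => p γ (lt_of_le_of_lt hγ hα))))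

/-- The edge relation of the glued graph `E_d = E_p ∪ ⋃_{f ∈ F} E_f`. -/
def gluedEdge (Ep : X → X → Prop) (F : Set ((X → X → Prop) × (X → X → ℝ))) :
    X → X → Prop :=
  fun a b => Ep a b ∨ ∃ f ∈ F, f.1 a b

/-- `Λ(v; B) = inf {d̂(a,v) + d̂(v,b) - d̂(a,b) : a, b ∈ B}`. -/
noncomputable def Lam (E : X → X → Prop) (d : X → X → ℝ) (v : X) (B : Set X) : ℝ :=
  sInf {r | ∃ a ∈ B, ∃ b ∈ B, r = hatd E d a v + hatd E d v b - hatd E d a b}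

/-- The gluing setup: a graph pseudometric `p = (Ep, wp)` and a family `F` of graph
pseudometrics such that each member meets `V_p`, agrees with `p̂` on the intersection of
the vertex sets, and distinct members only meet inside `V_p`; `wd` is the glued weight
function `d = p ∪ ⋃ F` on `E_d = E_p ∪ ⋃_{f ∈ F} E_f`. -/
structure GluingSetup (Ep : X → X → Prop) (wp : X → X → ℝ)
    (F : Set ((X → X → Prop) × (X → X → ℝ))) (wd : X → X → ℝ) : Prop where
  hp : IsGraphPseudometric Ep wp
  hF : ∀ f ∈ F, IsGraphPseudometric f.1 f.2
  meet : ∀ f ∈ F, (Vtx f.1 ∩ Vtx Ep).Nonempty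
  agree : ∀ f ∈ F, ∀ x ∈ Vtx f.1 ∩ Vtx Ep, ∀ y ∈ Vtx f.1 ∩ Vtx Ep, x ≠ y →
    hatd f.1 f.2 x y = hatd Ep wp x y
  inter_sub : ∀ f ∈ F, ∀ g ∈ F, f ≠ g → Vtx f.1 ∩ Vtx g.1 ⊆ Vtx Ep
  wd_p : ∀ ⦃a b⦄, Ep a b → wd a b = wp a b
  wd_F : ∀ f ∈ F, ∀ ⦃a b⦄, f.1 a b → wd a b = f.2 a b

section Walks

variable {E : X → X → Prop} {d : X → X → ℝ}

lemma zero_mem_walkSums (x : X) : (0 : ℝ) ∈ walkSums E d x x :=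
  ⟨0, fun _ => x, rfl, rfl, by simp, by simp⟩

lemma cons_mem_walkSums {x y z : X} {s : ℝ} (h : E x y) (hs : s ∈ walkSums E d y z) :
    d x y + s ∈ walkSums E d x z := by
  obtain ⟨n, c, h0, hn, hc, rfl⟩ := hs
  refine ⟨n + 1, fun i => Nat.casesOn i x c, rfl, hn, ?_, ?_⟩
  · rintro (_ | i) hi
    · simpa [h0] using h
    · exact hc i (by omega)
  · rw [Finset.sum_range_succ', add_comm]
    simp [h0]

/-- Induction on walks, adding edges at the start. -/
lemma walkSums_induction {P : X → X → ℝ → Prop} (nil : ∀ x, P x x 0)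
    (cons : ∀ x y z s, E x y → s ∈ walkSums E d y z → P y z s → P x z (d x y + s))
    {x y : X} {s : ℝ} (hs : s ∈ walkSums E d x y) : P x y s := by
  obtain ⟨n, c, rfl, rfl, hc, rfl⟩ := hs
  induction n generalizing c with
  | zero => simpa using nil (c 0)
  | succ n ih =>
    have hc' : ∀ i, i < n → E (c (i + 1)) (c (i + 1 + 1)) := fun i hi => hc (i + 1) (by omega)
    rw [Finset.sum_range_succ', add_comm (Finset.sum _ _)]
    exact cons _ (c 1) _ _ (hc 0 (by omega)) ⟨n, fun i => c (i + 1), rfl, rfl, hc', rfl⟩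
      (ih (fun i => c (i + 1)) hc')

lemma edge_mem_walkSums {x y : X} (h : E x y) : d x y ∈ walkSums E d x y := by
  simpa using cons_mem_walkSums h (zero_mem_walkSums (d := d) y)

lemma add_mem_walkSums {x y z : X} {s t : ℝ} (hs : s ∈ walkSums E d x y)
    (ht : t ∈ walkSums E d y z) : s + t ∈ walkSums E d x z := by
  revert ht
  refine walkSums_induction (P := fun x y s => t ∈ walkSums E d y z → s + t ∈ walkSums E d x z)
    (fun x ht => by simpa using ht) (fun x y w s hxy _ ih ht => ?_) hs
  rw [add_assoc]
  exact cons_mem_walkSums hxy (ih ht)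

lemma walkSums_comm (hE : ∀ ⦃a b⦄, E a b → E b a) (hd : ∀ ⦃a b⦄, E a b → d a b = d b a)
    {x y : X} {s : ℝ} (hs : s ∈ walkSums E d x y) : s ∈ walkSums E d y x := by
  refine walkSums_induction (P := fun x y s => s ∈ walkSums E d y x)
    zero_mem_walkSums (fun x y w s hxy _ ih => ?_) hs
  rw [add_comm, hd hxy]
  exact add_mem_walkSums ih (edge_mem_walkSums (hE hxy))

lemma sub_le_of_mem_walkSums {φ : X → ℝ} (hφ : ∀ ⦃a b⦄, E a b → φ a - φ b ≤ d a b)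
    {x y : X} {s : ℝ} (hs : s ∈ walkSums E d x y) : φ x - φ y ≤ s :=
  walkSums_induction (P := fun x y s => φ x - φ y ≤ s) (fun x => by simp)
    (fun x y z s hxy _ ih => by linarith [hφ hxy]) hs

lemma joined_iff_nonempty_walkSums (d : X → X → ℝ) {x y : X} :
    Joined E x y ↔ (walkSums E d x y).Nonempty := by
  constructor
  · rintro ⟨n, c, h0, hn, hc⟩
    exact ⟨_, n, c, h0, hn, hc, rfl⟩
  · rintro ⟨_, n, c, h0, hn, hc, _⟩
    exact ⟨n, c, h0, hn, hc⟩

lemma Joined.mono {E' : X → X → Prop} (h : ∀ ⦃a b⦄, E a b → E' a b) {x y : X}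
    (hxy : Joined E x y) : Joined E' x y := by
  obtain ⟨n, c, h0, hn, hc⟩ := hxy
  exact ⟨n, c, h0, hn, fun i hi => h (hc i hi)⟩

lemma Joined.trans {x y z : X} (hxy : Joined E x y) (hyz : Joined E y z) : Joined E x z := by
  rw [joined_iff_nonempty_walkSums 0] at *
  exact ⟨_, add_mem_walkSums hxy.some_mem hyz.some_mem⟩

lemma Joined.symm (hE : ∀ ⦃a b⦄, E a b → E b a) {x y : X} (hxy : Joined E x y) :
    Joined E y x := by
  rw [joined_iff_nonempty_walkSums 0] at *
  exact ⟨_, walkSums_comm hE (fun _ _ _ => rfl) hxy.some_mem⟩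

lemma le_hatd_of_lipschitz {φ : X → ℝ} (hφ : ∀ ⦃a b⦄, E a b → φ a - φ b ≤ d a b)
    {x y : X} (hxy : Joined E x y) : φ x - φ y ≤ hatd E d x y :=
  le_csInf ((joined_iff_nonempty_walkSums d).1 hxy) fun _ hs => sub_le_of_mem_walkSums hφ hs

lemma hatd_le_of_mem_walkSums (hd : ∀ ⦃a b⦄, E a b → 0 ≤ d a b) {x y : X} {s : ℝ}
    (hs : s ∈ walkSums E d x y) : hatd E d x y ≤ s :=
  csInf_le ⟨0, fun _ ht => by
    simpa using sub_le_of_mem_walkSums (φ := fun _ => 0) (by simpa using hd) ht⟩ hs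

end Walks

namespace IsGraphPseudometric

variable {E : X → X → Prop} {d : X → X → ℝ}

lemma left_mem {a b : X} (hab : E a b) : a ∈ Vtx E := ⟨b, hab⟩

lemma right_mem (h : IsGraphPseudometric E d) {a b : X} (hab : E a b) : b ∈ Vtx E :=
  ⟨a, h.symm hab⟩

lemma hatd_nonneg (h : IsGraphPseudometric E d) {x y : X} (hx : x ∈ Vtx E) (hy : y ∈ Vtx E) :
    0 ≤ hatd E d x y := by
  simpa using le_hatd_of_lipschitz (φ := fun _ => 0) (by simpa using h.nonneg)
    (h.connected x hx y hy)

lemma hatd_self (h : IsGraphPseudometric E d) {x : X} (hx : x ∈ Vtx E) : hatd E d x x = 0 :=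
  le_antisymm (hatd_le_of_mem_walkSums h.nonneg (zero_mem_walkSums x)) (h.hatd_nonneg hx hx)

lemma hatd_comm (h : IsGraphPseudometric E d) (x y : X) : hatd E d x y = hatd E d y x := by
  unfold hatd
  congr 1
  ext s
  exact ⟨walkSums_comm h.symm h.wt_symm, walkSums_comm h.symm h.wt_symm⟩

lemma exists_walkSums_lt (h : IsGraphPseudometric E d) {x y : X} (hx : x ∈ Vtx E)
    (hy : y ∈ Vtx E) {ε : ℝ} (hε : 0 < ε) : ∃ s ∈ walkSums E d x y, s < hatd E d x y + ε :=
  Real.lt_sInf_add_pos ((joined_iff_nonempty_walkSums d).1 (h.connected x hx y hy)) hε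

lemma hatd_triangle (h : IsGraphPseudometric E d) {x y z : X} (hx : x ∈ Vtx E)
    (hy : y ∈ Vtx E) (hz : z ∈ Vtx E) : hatd E d x z ≤ hatd E d x y + hatd E d y z := by
  refine le_of_forall_pos_le_add fun ε hε => ?_
  obtain ⟨s, hs, hs'⟩ := h.exists_walkSums_lt hx hy (half_pos hε)
  obtain ⟨t, ht, ht'⟩ := h.exists_walkSums_lt hy hz (half_pos hε)
  linarith [hatd_le_of_mem_walkSums h.nonneg (add_mem_walkSums hs ht)]

/-- McShane extension of a `1`-Lipschitz function from a set of vertices to all vertices. -/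
lemma exists_lipschitz_extension (h : IsGraphPseudometric E d) {S : Set X} (hS : S ⊆ Vtx E)
    (hne : S.Nonempty) {φ : X → ℝ} (hφ : ∀ u ∈ S, ∀ v ∈ S, φ u - φ v ≤ hatd E d u v) :
    ∃ ψ : X → ℝ, (∀ v ∈ S, ψ v = φ v) ∧
      ∀ u ∈ Vtx E, ∀ v ∈ Vtx E, ψ u - ψ v ≤ hatd E d u v := by
  set T : X → Set ℝ := fun v => (fun s => φ s + hatd E d s v) '' S
  have hTne : ∀ v, (T v).Nonempty := fun v => hne.image _
  have hTbdd : ∀ v ∈ Vtx E, BddBelow (T v) := by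
    intro v hv
    obtain ⟨s₀, hs₀⟩ := hne
    refine ⟨φ s₀ - hatd E d s₀ v, ?_⟩
    rintro _ ⟨s, hs, rfl⟩
    have := h.hatd_triangle (hS hs₀) hv (hS hs)
    rw [h.hatd_comm v s] at this
    dsimp only
    linarith [hφ s₀ hs₀ s hs]
  refine ⟨fun v => sInf (T v), fun v hv => le_antisymm ?_ ?_, fun u hu v hv => ?_⟩
  · exact csInf_le (hTbdd v (hS hv)) ⟨v, hv, by simp [h.hatd_self (hS hv)]⟩
  · refine le_csInf (hTne v) ?_
    rintro _ ⟨s, hs, rfl⟩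
    have := hφ v hv s hs
    rw [h.hatd_comm] at this
    dsimp only
    linarith
  · rw [sub_le_iff_le_add', ← sub_le_iff_le_add]
    refine le_csInf (hTne v) ?_
    rintro _ ⟨s, hs, rfl⟩
    have h₁ : sInf (T u) ≤ φ s + hatd E d s u := csInf_le (hTbdd u hu) ⟨s, hs, rfl⟩
    have h₂ := h.hatd_triangle (hS hs) hv hu
    rw [h.hatd_comm v u] at h₂
    dsimp only
    linarith

lemma hatd_sub_hatd_le (h : IsGraphPseudometric E d) {a u v : X} (ha : a ∈ Vtx E)
    (hu : u ∈ Vtx E) (hv : v ∈ Vtx E) : hatd E d u a - hatd E d v a ≤ hatd E d u v := by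
  linarith [h.hatd_triangle hu hv ha]

lemma Lam_le (h : IsGraphPseudometric E d) {B : Set X} (hB : B ⊆ Vtx E) {v a b : X}
    (hv : v ∈ Vtx E) (ha : a ∈ B) (hb : b ∈ B) :
    Lam E d v B ≤ hatd E d a v + hatd E d v b - hatd E d a b := by
  refine csInf_le ⟨0, ?_⟩ ⟨a, ha, b, hb, rfl⟩
  rintro _ ⟨a, ha, b, hb, rfl⟩
  linarith [h.hatd_triangle (hB ha) hv (hB hb)]

end IsGraphPseudometric

namespace GluingSetup

variable {Ep : X → X → Prop} {wp : X → X → ℝ} {F : Set ((X → X → Prop) × (X → X → ℝ))}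
  {wd : X → X → ℝ}

lemma agree' (hs : GluingSetup Ep wp F wd) {f : (X → X → Prop) × (X → X → ℝ)} (hf : f ∈ F)
    {x y : X} (hx : x ∈ Vtx f.1 ∩ Vtx Ep) (hy : y ∈ Vtx f.1 ∩ Vtx Ep) :
    hatd f.1 f.2 x y = hatd Ep wp x y := by
  by_cases hxy : x = y
  · subst hxy
    rw [(hs.hF f hf).hatd_self hx.1, hs.hp.hatd_self hx.2]
  · exact hs.agree f hf x hx y hy hxy

/-- Compatible `1`-Lipschitz functions on the pieces glue to a function that is `1`-Lipschitz
along the edges of the glued graph. -/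
lemma exists_glued_lipschitz (hs : GluingSetup Ep wp F wd) {φ : X → ℝ}
    (hφ : ∀ u ∈ Vtx Ep, ∀ v ∈ Vtx Ep, φ u - φ v ≤ hatd Ep wp u v)
    {ψ : (X → X → Prop) × (X → X → ℝ) → X → ℝ}
    (hψφ : ∀ f ∈ F, ∀ v ∈ Vtx f.1 ∩ Vtx Ep, ψ f v = φ v)
    (hψ : ∀ f ∈ F, ∀ u ∈ Vtx f.1, ∀ v ∈ Vtx f.1, ψ f u - ψ f v ≤ hatd f.1 f.2 u v) :
    ∃ θ : X → ℝ, (∀ v ∈ Vtx Ep, θ v = φ v) ∧ (∀ f ∈ F, ∀ v ∈ Vtx f.1, θ v = ψ f v) ∧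
      ∀ ⦃a b⦄, gluedEdge Ep F a b → θ a - θ b ≤ wd a b := by
  have key : ∀ v, ∃ r, (v ∈ Vtx Ep → r = φ v) ∧ ∀ f ∈ F, v ∈ Vtx f.1 → r = ψ f v := by
    intro v
    by_cases hv : v ∈ Vtx Ep
    · exact ⟨φ v, fun _ => rfl, fun f hf hvf => (hψφ f hf v ⟨hvf, hv⟩).symm⟩
    · by_cases hF : ∃ f ∈ F, v ∈ Vtx f.1
      · obtain ⟨f, hf, hvf⟩ := hF
        refine ⟨ψ f v, fun h => absurd h hv, fun g hg hvg => ?_⟩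
        by_cases hfg : f = g
        · rw [hfg]
        · exact absurd (hs.inter_sub f hf g hg hfg ⟨hvf, hvg⟩) hv
      · exact ⟨0, fun h => absurd h hv, fun f hf hvf => absurd ⟨f, hf, hvf⟩ hF⟩
  choose θ hθp hθF using key
  refine ⟨θ, hθp, fun f hf v => hθF v f hf, ?_⟩
  rintro a b (hab | ⟨f, hf, hab⟩)
  · have ha := IsGraphPseudometric.left_mem hab
    have hb := hs.hp.right_mem hab
    rw [hθp a ha, hθp b hb, hs.wd_p hab, hs.hp.edge_eq hab]
    exact hφ a ha b hb
  · have ha := IsGraphPseudometric.left_mem hab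
    have hb := (hs.hF f hf).right_mem hab
    rw [hθF a f hf ha, hθF b f hf hb, hs.wd_F f hf hab, (hs.hF f hf).edge_eq hab]
    exact hψ f hf a ha b hb

/-- A `1`-Lipschitz function on `V_p` extends to each of the glued pieces. -/
lemma exists_extension_piece (hs : GluingSetup Ep wp F wd) {φ : X → ℝ}
    (hφ : ∀ u ∈ Vtx Ep, ∀ v ∈ Vtx Ep, φ u - φ v ≤ hatd Ep wp u v)
    {f : (X → X → Prop) × (X → X → ℝ)} (hf : f ∈ F) :
    ∃ ψ : X → ℝ, (∀ v ∈ Vtx f.1 ∩ Vtx Ep, ψ v = φ v) ∧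
      ∀ u ∈ Vtx f.1, ∀ v ∈ Vtx f.1, ψ u - ψ v ≤ hatd f.1 f.2 u v :=
  (hs.hF f hf).exists_lipschitz_extension Set.inter_subset_left (hs.meet f hf)
    fun u hu v hv => by
      rw [hs.agree' hf hu hv]
      exact hφ u hu.2 v hv.2

lemma gluedEdge_symm (hs : GluingSetup Ep wp F wd) ⦃a b : X⦄ (hab : gluedEdge Ep F a b) :
    gluedEdge Ep F b a := by
  obtain hab | ⟨f, hf, hab⟩ := hab
  · exact Or.inl (hs.hp.symm hab)
  · exact Or.inr ⟨f, hf, (hs.hF f hf).symm hab⟩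

lemma wd_nonneg (hs : GluingSetup Ep wp F wd) ⦃a b : X⦄ (hab : gluedEdge Ep F a b) :
    0 ≤ wd a b := by
  obtain hab | ⟨f, hf, hab⟩ := hab
  · exact hs.wd_p hab ▸ hs.hp.nonneg hab
  · exact hs.wd_F f hf hab ▸ (hs.hF f hf).nonneg hab

lemma wd_comm (hs : GluingSetup Ep wp F wd) ⦃a b : X⦄ (hab : gluedEdge Ep F a b) :
    wd a b = wd b a := by
  obtain hab | ⟨f, hf, hab⟩ := hab
  · rw [hs.wd_p hab, hs.wd_p (hs.hp.symm hab), hs.hp.wt_symm hab]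
  · rw [hs.wd_F f hf hab, hs.wd_F f hf ((hs.hF f hf).symm hab), (hs.hF f hf).wt_symm hab]

lemma wd_le_hatd (hs : GluingSetup Ep wp F wd) ⦃a b : X⦄ (hab : gluedEdge Ep F a b) :
    wd a b ≤ hatd (gluedEdge Ep F) wd a b := by
  have hj : Joined (gluedEdge Ep F) a b :=
    (joined_iff_nonempty_walkSums wd).2 ⟨_, edge_mem_walkSums hab⟩
  obtain hab | ⟨f, hf, hab⟩ := hab
  · have ha := IsGraphPseudometric.left_mem hab
    have hb := hs.hp.right_mem hab
    have hφ : ∀ u ∈ Vtx Ep, ∀ v ∈ Vtx Ep, hatd Ep wp u b - hatd Ep wp v b ≤ hatd Ep wp u v :=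
      fun u hu v hv => hs.hp.hatd_sub_hatd_le hb hu hv
    choose! ψ hψφ hψ using
      fun f (hf : f ∈ F) => hs.exists_extension_piece (φ := fun u => hatd Ep wp u b) hφ hf
    obtain ⟨θ, hθ, -, hlip⟩ := hs.exists_glued_lipschitz hφ hψφ hψ
    have := le_hatd_of_lipschitz hlip hj
    rw [hθ a ha, hθ b hb, hs.hp.hatd_self hb, sub_zero] at this
    rwa [hs.wd_p hab, hs.hp.edge_eq hab]
  · have h := hs.hF f hf
    have ha := IsGraphPseudometric.left_mem hab
    have hb := h.right_mem hab
    have hlipf : ∀ u ∈ Vtx f.1, ∀ v ∈ Vtx f.1,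
        hatd f.1 f.2 u b - hatd f.1 f.2 v b ≤ hatd f.1 f.2 u v :=
      fun u hu v hv => h.hatd_sub_hatd_le hb hu hv
    obtain ⟨φ, hφf, hφ⟩ := hs.hp.exists_lipschitz_extension (S := Vtx f.1 ∩ Vtx Ep)
      (φ := fun u => hatd f.1 f.2 u b) Set.inter_subset_right (hs.meet f hf)
      fun u hu v hv => by
        rw [← hs.agree' hf hu hv]
        exact hlipf u hu.1 v hv.1
    have hext : ∀ g ∈ F, ∃ ψ : X → ℝ, (∀ v ∈ Vtx g.1 ∩ Vtx Ep, ψ v = φ v) ∧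
        (∀ u ∈ Vtx g.1, ∀ v ∈ Vtx g.1, ψ u - ψ v ≤ hatd g.1 g.2 u v) ∧
        (g = f → ∀ v, ψ v = hatd f.1 f.2 v b) := by
      intro g hg
      by_cases hgf : g = f
      · subst hgf
        exact ⟨fun u => hatd g.1 g.2 u b, fun v hv => (hφf v hv).symm, hlipf, fun _ _ => rfl⟩
      · obtain ⟨ψ, hψ⟩ := hs.exists_extension_piece hφ hg
        exact ⟨ψ, hψ.1, hψ.2, fun h => absurd h hgf⟩
    choose! ψ hψφ hψ hψf using hext
    obtain ⟨θ, -, hθ, hlip⟩ := hs.exists_glued_lipschitz hφ hψφ hψ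
    have := le_hatd_of_lipschitz hlip hj
    rw [hθ f hf a ha, hθ f hf b hb, hψf f hf rfl, hψf f hf rfl, h.hatd_self hb, sub_zero] at this
    rwa [hs.wd_F f hf hab, h.edge_eq hab]

lemma exists_joined_base (hs : GluingSetup Ep wp F wd) {x : X} (hx : x ∈ Vtx (gluedEdge Ep F)) :
    ∃ q ∈ Vtx Ep, Joined (gluedEdge Ep F) x q := by
  obtain ⟨y, hxy | ⟨f, hf, hxy⟩⟩ := hx
  · exact ⟨x, ⟨y, hxy⟩, 0, fun _ => x, rfl, rfl, by simp⟩
  · obtain ⟨q, hqf, hqp⟩ := hs.meet f hf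
    exact ⟨q, hqp, ((hs.hF f hf).connected x ⟨y, hxy⟩ q hqf).mono
      fun a b hab => Or.inr ⟨f, hf, hab⟩⟩

/-- The glued function is a graph pseudometric. -/
lemma isGraphPseudometric (hs : GluingSetup Ep wp F wd) :
    IsGraphPseudometric (gluedEdge Ep F) wd where
  symm := hs.gluedEdge_symm
  irrefl := by
    rintro a (ha | ⟨f, hf, ha⟩)
    · exact hs.hp.irrefl a ha
    · exact (hs.hF f hf).irrefl a ha
  wt_symm := hs.wd_comm
  nonneg := hs.wd_nonneg
  connected := by
    intro x hx y hy
    obtain ⟨q, hq, hxq⟩ := hs.exists_joined_base hx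
    obtain ⟨r, hr, hyr⟩ := hs.exists_joined_base hy
    exact (hxq.trans ((hs.hp.connected q hq r hr).mono fun _ _ => Or.inl)).trans
      (hyr.symm hs.gluedEdge_symm)
  edge_eq _ _ hab := le_antisymm (hs.wd_le_hatd hab)
    (hatd_le_of_mem_walkSums hs.wd_nonneg (edge_mem_walkSums hab))

lemma Vtx_subset_glued {f : (X → X → Prop) × (X → X → ℝ)} (hf : f ∈ F) :
    Vtx f.1 ⊆ Vtx (gluedEdge Ep F) := fun _ ⟨y, hy⟩ => ⟨y, Or.inr ⟨f, hf, hy⟩⟩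

/-- A walk leaving `V_f \ V_p` passes through `V_f ∩ V_p`. -/
lemma exists_split_walkSums (hs : GluingSetup Ep wp F wd)
    {f : (X → X → Prop) × (X → X → ℝ)} (hf : f ∈ F) {x z : X} (hx : x ∈ Vtx f.1)
    (hz : z ∉ Vtx f.1 \ Vtx Ep) {s : ℝ} (hsum : s ∈ walkSums (gluedEdge Ep F) wd x z) :
    ∃ u ∈ Vtx f.1 ∩ Vtx Ep, ∃ s₁ ∈ walkSums (gluedEdge Ep F) wd x u,
      ∃ s₂ ∈ walkSums (gluedEdge Ep F) wd u z, s₁ + s₂ = s := by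
  revert hx hz
  refine walkSums_induction (P := fun x z s => x ∈ Vtx f.1 → z ∉ Vtx f.1 \ Vtx Ep →
    ∃ u ∈ Vtx f.1 ∩ Vtx Ep, ∃ s₁ ∈ walkSums (gluedEdge Ep F) wd x u,
      ∃ s₂ ∈ walkSums (gluedEdge Ep F) wd u z, s₁ + s₂ = s) ?_ ?_ hsum
  · intro x hx hz
    exact ⟨x, ⟨hx, by_contra fun h => hz ⟨hx, h⟩⟩, 0, zero_mem_walkSums x, 0,
      zero_mem_walkSums x, add_zero 0⟩
  · intro x y z s hxy hsy ih hx hz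
    by_cases hxp : x ∈ Vtx Ep
    · exact ⟨x, ⟨hx, hxp⟩, 0, zero_mem_walkSums x, _, cons_mem_walkSums hxy hsy, zero_add _⟩
    · have hy : y ∈ Vtx f.1 := by
        obtain h | ⟨g, hg, h⟩ := hxy
        · exact absurd ⟨y, h⟩ hxp
        · by_cases hfg : f = g
          · subst hfg
            exact (hs.hF f hf).right_mem h
          · exact absurd (hs.inter_sub f hf g hg hfg ⟨hx, ⟨y, h⟩⟩) hxp
      obtain ⟨u, hu, s₁, hs₁, s₂, hs₂, rfl⟩ := ih hy hz
      exact ⟨u, hu, _, cons_mem_walkSums hxy hs₁, s₂, hs₂, add_assoc _ _ _⟩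

lemma exists_hatd_add_hatd_lt (hs : GluingSetup Ep wp F wd)
    {f : (X → X → Prop) × (X → X → ℝ)} (hf : f ∈ F) {x z : X} (hx : x ∈ Vtx f.1)
    (hzE : z ∈ Vtx (gluedEdge Ep F)) (hz : z ∉ Vtx f.1 \ Vtx Ep) {ε : ℝ} (hε : 0 < ε) :
    ∃ u ∈ Vtx f.1 ∩ Vtx Ep, hatd (gluedEdge Ep F) wd x u + hatd (gluedEdge Ep F) wd u z <
      hatd (gluedEdge Ep F) wd x z + ε := by
  obtain ⟨s, hsum, hlt⟩ :=
    hs.isGraphPseudometric.exists_walkSums_lt (Vtx_subset_glued hf hx) hzE hε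
  obtain ⟨u, hu, s₁, hs₁, s₂, hs₂, rfl⟩ := hs.exists_split_walkSums hf hx hz hsum
  exact ⟨u, hu, by linarith [hatd_le_of_mem_walkSums hs.wd_nonneg hs₁,
    hatd_le_of_mem_walkSums hs.wd_nonneg hs₂]⟩

/-- If neither `y` nor `a` lies in `V_f \ V_p`, then `d̂(x,y)` exceeds
`d̂(a,b) - d̂(a,x) - d̂(y,b)` by at least `Λ(x; V_f ∩ V_p)`. -/
lemma Lam_le_of_notMem (hs : GluingSetup Ep wp F wd)
    {f : (X → X → Prop) × (X → X → ℝ)} (hf : f ∈ F) {x y a b : X} (hx : x ∈ Vtx f.1)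
    (hyE : y ∈ Vtx (gluedEdge Ep F)) (hy : y ∉ Vtx f.1 \ Vtx Ep)
    (haE : a ∈ Vtx (gluedEdge Ep F)) (ha : a ∉ Vtx f.1 \ Vtx Ep)
    (hbE : b ∈ Vtx (gluedEdge Ep F)) :
    Lam (gluedEdge Ep F) wd x (Vtx f.1 ∩ Vtx Ep) ≤
      hatd (gluedEdge Ep F) wd x y - (hatd (gluedEdge Ep F) wd a b -
        hatd (gluedEdge Ep F) wd a x - hatd (gluedEdge Ep F) wd y b) := by
  have h := hs.isGraphPseudometric
  have hsub : Vtx f.1 ∩ Vtx Ep ⊆ Vtx (gluedEdge Ep F) :=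
    Set.inter_subset_left.trans (Vtx_subset_glued hf)
  have hxE := Vtx_subset_glued (Ep := Ep) hf hx
  refine le_of_forall_pos_le_add fun ε hε => ?_
  obtain ⟨s, hsB, hslt⟩ := hs.exists_hatd_add_hatd_lt hf hx hyE hy (half_pos hε)
  obtain ⟨u, huB, hult⟩ := hs.exists_hatd_add_hatd_lt hf hx haE ha (half_pos hε)
  have h₁ := h.hatd_triangle haE (hsub huB) hbE
  have h₂ := h.hatd_triangle (hsub huB) (hsub hsB) hbE
  have h₃ := h.hatd_triangle (hsub hsB) hyE hbE
  have h₄ := h.Lam_le hsub hxE huB hsB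
  rw [h.hatd_comm u x] at h₄
  rw [h.hatd_comm u a, h.hatd_comm x a] at hult
  linarith

end GluingSetup

/-- In the gluing setup, for distinct `f, g ∈ 𝔉`, `x ∈ V_f \ V_p`
and `y ∈ V_g \ V_p`:
`d̂(x,y) − ď(x,y) ≥ min {Λ(x; V_f ∩ V_p), Λ(y; V_p ∩ V_g)}`. -/
theorem gluing_floppiness_bound₂ (Ep : X → X → Prop) (wp : X → X → ℝ)
    (F : Set ((X → X → Prop) × (X → X → ℝ))) (wd : X → X → ℝ)
    (hs : GluingSetup Ep wp F wd)
    (f g : (X → X → Prop) × (X → X → ℝ)) (hf : f ∈ F) (hg : g ∈ F) (hfg : f ≠ g)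
    (x : X) (hx : x ∈ Vtx f.1 \ Vtx Ep) (y : X) (hy : y ∈ Vtx g.1 \ Vtx Ep) :
    min (Lam (gluedEdge Ep F) wd x (Vtx f.1 ∩ Vtx Ep))
        (Lam (gluedEdge Ep F) wd y (Vtx Ep ∩ Vtx g.1)) ≤
      hatd (gluedEdge Ep F) wd x y - checkd (gluedEdge Ep F) wd x y := by
  have h := hs.isGraphPseudometric
  have hxE := GluingSetup.Vtx_subset_glued (Ep := Ep) hf hx.1
  have hyE := GluingSetup.Vtx_subset_glued (Ep := Ep) hg hy.1
  have hyf : y ∉ Vtx f.1 \ Vtx Ep := fun hyf =>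
    hy.2 (hs.inter_sub f hf g hg hfg ⟨hyf.1, hy.1⟩)
  have hxg : x ∉ Vtx g.1 \ Vtx Ep := fun hxg =>
    hx.2 (hs.inter_sub f hf g hg hfg ⟨hx.1, hxg.1⟩)
  rw [le_sub_comm]
  refine csSup_le ⟨0, Or.inl rfl⟩ ?_
  rintro r (rfl | ⟨a, b, hab, rfl⟩)
  · rw [sub_nonneg]
    refine le_of_forall_pos_le_add fun ε hε => ?_
    obtain ⟨s, hsB, hslt⟩ := hs.exists_hatd_add_hatd_lt hf hx.1 hyE hyf (half_pos hε)
    have hsE := GluingSetup.Vtx_subset_glued (Ep := Ep) hf hsB.1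
    have hsg : s ∉ Vtx g.1 \ Vtx Ep := fun hsg => hsg.2 hsB.2
    obtain ⟨t, htB, htlt⟩ := hs.exists_hatd_add_hatd_lt hg hy.1 hsE hsg (half_pos hε)
    have htE := GluingSetup.Vtx_subset_glued (Ep := Ep) hg htB.1
    have hΛx := h.Lam_le (Set.inter_subset_left.trans (GluingSetup.Vtx_subset_glued hf))
      hxE hsB hsB
    have hΛy := h.Lam_le (Set.inter_subset_left.trans (GluingSetup.Vtx_subset_glued hg))
      hyE htB htB
    rw [h.hatd_self hsE, h.hatd_comm s x] at hΛx
    rw [h.hatd_self htE, h.hatd_comm t y, Set.inter_comm] at hΛy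
    rw [h.hatd_comm y s] at htlt
    have hts := h.hatd_nonneg htE hsE
    have hm₁ := min_le_left (Lam (gluedEdge Ep F) wd x (Vtx f.1 ∩ Vtx Ep))
      (Lam (gluedEdge Ep F) wd y (Vtx Ep ∩ Vtx g.1))
    have hm₂ := min_le_right (Lam (gluedEdge Ep F) wd x (Vtx f.1 ∩ Vtx Ep))
      (Lam (gluedEdge Ep F) wd y (Vtx Ep ∩ Vtx g.1))
    linarith
  · rw [le_sub_comm, h.edge_eq hab]
    have haE := IsGraphPseudometric.left_mem hab
    have hbE := h.right_mem hab
    by_cases ha : a ∈ Vtx f.1 \ Vtx Ep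
    · have hb : b ∉ Vtx g.1 \ Vtx Ep := by
        intro hb
        obtain hab | ⟨k, hk, hab⟩ := hab
        · exact ha.2 ⟨b, hab⟩
        · by_cases hkf : f = k
          · subst hkf
            exact hb.2 (hs.inter_sub f hf g hg hfg ⟨(hs.hF f hf).right_mem hab, hb.1⟩)
          · exact ha.2 (hs.inter_sub f hf k hk hkf ⟨ha.1, ⟨b, hab⟩⟩)
      have key := hs.Lam_le_of_notMem hg hy.1 hxE hxg hbE hb haE
      rw [Set.inter_comm, h.hatd_comm y x, h.hatd_comm b a, h.hatd_comm b y,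
        h.hatd_comm x a] at key
      exact (min_le_right _ _).trans (by linarith)
    · exact (min_le_left _ _).trans (hs.Lam_le_of_notMem hf hx.1 hyE hyf haE ha hbE)

end GraphMetricPaper
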